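/- (Gaussian mechanism convexity bound) Let P, Q be probability distributions on a compact set C ⊂ ℝ^r with radius K = max_{w∈C} ‖w‖, and let P * N(0, λ²I) denote the convolution with an isotropic Gaussian. Then E_γ(P * N(0,λ²I) ‖ Q * N(0,λ²I)) ≤ θ_γ(2K, λ), where θ_γ(a, λ) = Q(log γ · λ/a − a/(2λ)) − γ Q(log γ · λ/a + a/(2λ)). -/

import Mathlib

/-!
The proof has three layers.

* Convexity. For each event `S`, `gaussConv P l S` is the `P`-average of the numbers `G (S - a)`,
  where `G = N(0, l² I)`. Averaging over `a ∼ P` and `b ∼ Q` reduces the claim to the bound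
  `G (S - a) - γ G (S - b) ≤ θ_γ(2K, l)` for two fixed points `a, b ∈ C`, which satisfy
  `‖a - b‖ ≤ 2K`.

* Neyman–Pearson. With `w = a - b` and after translating by `a`, the left-hand side is the integral
  over an event of `g x - γ g (x + w)`, `g` being the density of `G`. This integrand is positive
  exactly on a half-space orthogonal to `w`, so that half-space is the worst event. Linear
  functionals of `G` are Gaussian (by characteristic functions), hence the value there is
  `θ_γ(‖w‖, l)`.

* Monotonicity in the distance. Neyman–Pearson in dimension one, applied to half-lines, says
  `θ_γ(d, l) = sup_s (Q(s) - γ Q(s + d / l))`. The expression under the supremum is nondecreasing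
  in `d` because `Q` is nonincreasing, so `θ_γ(‖w‖, l) ≤ θ_γ(2K, l)`. The degenerate case `w = 0`
  is covered by `θ_γ ≥ 0`, i.e. Neyman–Pearson for the empty event.
-/

open MeasureTheory

/-- The `E_γ`-divergence: `sup` over measurable sets `A` of `P(A) - γ Q(A)`. -/
noncomputable def Egamma {α : Type*} [MeasurableSpace α] (γ : ℝ) (P Q : Measure α) : ℝ :=
  ⨆ E : {E : Set α // MeasurableSet E}, ((P E).toReal - γ * (Q E).toReal)

/-- The isotropic Gaussian measure `N(μ, λ² I_r)` on `ℝ^r`. -/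
noncomputable def gaussianEuclidean {r : ℕ} (μ : EuclideanSpace ℝ (Fin r)) (l : ℝ) :
    Measure (EuclideanSpace ℝ (Fin r)) :=
  volume.withDensity fun x =>
    ENNReal.ofReal
      (Real.rpow (2 * Real.pi * l ^ 2) (-(r : ℝ) / 2) * Real.exp (-‖x - μ‖ ^ 2 / (2 * l ^ 2)))

/-- Convolution of a measure `P` on `ℝ^r` with the isotropic Gaussian `N(0, λ² I_r)`:
the law of `A + λN` with `A ∼ P` and `N` standard Gaussian, independent. -/
noncomputable def gaussConv {r : ℕ} (P : Measure (EuclideanSpace ℝ (Fin r))) (l : ℝ) :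
    Measure (EuclideanSpace ℝ (Fin r)) :=
  (P.prod (gaussianEuclidean (0 : EuclideanSpace ℝ (Fin r)) l)).map fun p => p.1 + p.2

/-- The standard Gaussian tail function `Q(v) = ∫_v^∞ (1/√(2π)) e^{-t²/2} dt`. -/
noncomputable def gaussTail (v : ℝ) : ℝ :=
  ∫ t in Set.Ioi v, Real.exp (-t ^ 2 / 2) / Real.sqrt (2 * Real.pi)

/-- `θ_γ(a, λ) = Q(log γ · λ/a − a/(2λ)) − γ Q(log γ · λ/a + a/(2λ))`. -/
noncomputable def thetaGamma (γ a l : ℝ) : ℝ :=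
  gaussTail (Real.log γ * l / a - a / (2 * l)) - γ * gaussTail (Real.log γ * l / a + a / (2 * l))

open ProbabilityTheory


/-! ### The Gaussian density and its marginals -/

/-- The density of `gaussianEuclidean 0 l` with respect to Lebesgue measure. -/
noncomputable def centeredPdf (r : ℕ) (l : ℝ) (x : EuclideanSpace ℝ (Fin r)) : ℝ :=
  Real.rpow (2 * Real.pi * l ^ 2) (-(r : ℝ) / 2) * Real.exp (-‖x‖ ^ 2 / (2 * l ^ 2))

lemma centeredPdf_nonneg {r : ℕ} (l : ℝ) (x : EuclideanSpace ℝ (Fin r)) :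
    0 ≤ centeredPdf r l x :=
  mul_nonneg (Real.rpow_nonneg (by positivity) _) (Real.exp_pos _).le

lemma measurable_centeredPdf (r : ℕ) (l : ℝ) : Measurable (centeredPdf r l) := by
  unfold centeredPdf
  fun_prop

lemma gaussianEuclidean_zero_eq {r : ℕ} (l : ℝ) :
    gaussianEuclidean (0 : EuclideanSpace ℝ (Fin r)) l
      = volume.withDensity fun x => ENNReal.ofReal (centeredPdf r l x) := by
  simp [gaussianEuclidean, centeredPdf]

lemma integral_centeredPdf {r : ℕ} {l : ℝ} (hl : 0 < l) :
    ∫ x, centeredPdf r l x = 1 := by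
  have h := GaussianFourier.integral_rexp_neg_mul_sq_norm (V := EuclideanSpace ℝ (Fin r))
    (b := 1 / (2 * l ^ 2)) (by positivity)
  have h2 : ∀ x : EuclideanSpace ℝ (Fin r), -‖x‖ ^ 2 / (2 * l ^ 2) = -(1 / (2 * l ^ 2)) * ‖x‖ ^ 2 :=
    fun x => by ring
  have hpi : Real.pi / (1 / (2 * l ^ 2)) = 2 * Real.pi * l ^ 2 := by field_simp
  have hpos : 0 < 2 * Real.pi * l ^ 2 := by positivity
  simp only [centeredPdf, h2]
  rw [integral_const_mul, h, hpi, finrank_euclideanSpace_fin]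
  change (2 * Real.pi * l ^ 2) ^ (-(r : ℝ) / 2) * _ = 1
  rw [← Real.rpow_add hpos]
  simp [neg_div]

lemma integrable_centeredPdf {r : ℕ} {l : ℝ} (hl : 0 < l) :
    Integrable (centeredPdf r l) := by
  by_contra h
  have := integral_centeredPdf (r := r) hl
  rw [integral_undef h] at this
  exact zero_ne_one this

lemma isProbabilityMeasure_gaussianEuclidean {r : ℕ} {l : ℝ} (hl : 0 < l) :
    IsProbabilityMeasure (gaussianEuclidean (0 : EuclideanSpace ℝ (Fin r)) l) := by
  constructor
  rw [gaussianEuclidean_zero_eq, withDensity_apply _ MeasurableSet.univ, Measure.restrict_univ,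
    ← ofReal_integral_eq_lintegral_ofReal (integrable_centeredPdf hl)
      (Filter.Eventually.of_forall fun x => centeredPdf_nonneg l x), integral_centeredPdf hl]
  simp

lemma gaussianEuclidean_real_eq {r : ℕ} {l : ℝ} (hl : 0 < l)
    {S : Set (EuclideanSpace ℝ (Fin r))} (hS : MeasurableSet S) :
    (gaussianEuclidean (0 : EuclideanSpace ℝ (Fin r)) l S).toReal
      = ∫ x in S, centeredPdf r l x := by
  rw [gaussianEuclidean_zero_eq, withDensity_apply _ hS,
    ← ofReal_integral_eq_lintegral_ofReal (integrable_centeredPdf hl).integrableOn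
      (Filter.Eventually.of_forall fun x => centeredPdf_nonneg l x), ENNReal.toReal_ofReal]
  exact integral_nonneg fun x => centeredPdf_nonneg l x

lemma gaussianEuclidean_real_shift_eq {r : ℕ} {l : ℝ} (hl : 0 < l)
    {S : Set (EuclideanSpace ℝ (Fin r))} (hS : MeasurableSet S) (w : EuclideanSpace ℝ (Fin r)) :
    (gaussianEuclidean (0 : EuclideanSpace ℝ (Fin r)) l {y | y - w ∈ S}).toReal
      = ∫ x in S, centeredPdf r l (x + w) := by
  have hS' : MeasurableSet {y | y - w ∈ S} := (measurable_id.sub_const w) hS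
  rw [gaussianEuclidean_real_eq hl hS', ← integral_indicator hS', ← integral_indicator hS,
    ← integral_add_right_eq_self _ w]
  congr 1
  ext x
  have hx : x + w ∈ {y | y - w ∈ S} ↔ x ∈ S := by
    rw [Set.mem_ofPred_eq, add_sub_cancel_right]
  by_cases h : x ∈ S
  · rw [Set.indicator_of_mem (hx.2 h), Set.indicator_of_mem h]
  · rw [Set.indicator_of_notMem (mt hx.1 h), Set.indicator_of_notMem h]

lemma charFun_gaussianEuclidean {r : ℕ} {l : ℝ} (hl : 0 < l) (t : EuclideanSpace ℝ (Fin r)) :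
    charFun (gaussianEuclidean (0 : EuclideanSpace ℝ (Fin r)) l) t
      = Complex.exp (-(l ^ 2 * ‖t‖ ^ 2 / 2 : ℝ)) := by
  have hb : 0 < ((1 / (2 * l ^ 2) : ℝ) : ℂ).re := by
    rw [Complex.ofReal_re]; positivity
  have h := fun t : EuclideanSpace ℝ (Fin r) =>
    GaussianFourier.integral_cexp_neg_mul_sq_norm_add hb Complex.I t
  -- The normalising constant is the Fourier integral at `t = 0`.
  have hmass := integral_centeredPdf (r := r) hl
  have hc : ∀ x : EuclideanSpace ℝ (Fin r), (centeredPdf r l x : ℂ)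
      = ((2 * Real.pi * l ^ 2).rpow (-(r : ℝ) / 2) : ℝ)
        * Complex.exp (-((1 / (2 * l ^ 2) : ℝ) : ℂ) * (‖x‖ : ℂ) ^ 2) := by
    intro x
    rw [centeredPdf, Complex.ofReal_mul, Complex.ofReal_exp]
    congr 2
    push_cast
    ring
  have hmass' : ∫ x, (centeredPdf r l x : ℂ) = 1 := by
    rw [integral_complex_ofReal, hmass, Complex.ofReal_one]
  simp only [hc] at hmass'
  rw [integral_const_mul] at hmass'
  have h0 := h 0
  simp only [inner_zero_left, Complex.ofReal_zero, mul_zero, add_zero, norm_zero,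
    ne_eq, OfNat.ofNat_ne_zero, not_false_eq_true, zero_pow, zero_div, Complex.exp_zero,
    mul_one] at h0
  rw [h0] at hmass'
  rw [charFun_apply, gaussianEuclidean_zero_eq, integral_withDensity_eq_integral_toReal_smul
    (measurable_centeredPdf r l).ennreal_ofReal (by simp)]
  have hint : ∀ x : EuclideanSpace ℝ (Fin r),
      (ENNReal.ofReal (centeredPdf r l x)).toReal • Complex.exp (↑(inner ℝ x t) * Complex.I)
      = ((2 * Real.pi * l ^ 2).rpow (-(r : ℝ) / 2) : ℝ)
        * Complex.exp (-((1 / (2 * l ^ 2) : ℝ) : ℂ) * (‖x‖ : ℂ) ^ 2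
          + Complex.I * (inner ℝ t x : ℝ)) := by
    intro x
    rw [ENNReal.toReal_ofReal (centeredPdf_nonneg l x), Complex.real_smul, hc, Complex.exp_add,
      real_inner_comm, mul_comm Complex.I, mul_assoc]
  simp only [hint]
  rw [integral_const_mul, h t, ← mul_assoc, hmass', one_mul]
  congr 1
  have : (l : ℂ) ≠ 0 := by exact_mod_cast hl.ne'
  push_cast
  field_simp
  rw [Complex.I_sq]
  ring

/-- One-dimensional marginals of `N(0, l² I)` are Gaussian; the direction is normalised so that the
marginal is standard. -/
lemma map_inner_gaussianEuclidean {r : ℕ} {l : ℝ} (hl : 0 < l) {e : EuclideanSpace ℝ (Fin r)}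
    (he : l * ‖e‖ = 1) :
    (gaussianEuclidean (0 : EuclideanSpace ℝ (Fin r)) l).map (fun x => inner ℝ e x)
      = gaussianReal 0 1 := by
  have := isProbabilityMeasure_gaussianEuclidean (r := r) hl
  have hm : Measurable (fun x : EuclideanSpace ℝ (Fin r) => (inner ℝ e x : ℝ)) := by fun_prop
  have := Measure.isProbabilityMeasure_map
    (μ := gaussianEuclidean (0 : EuclideanSpace ℝ (Fin r)) l) hm.aemeasurable
  refine Measure.ext_of_charFun (funext fun s => ?_)
  rw [charFun_gaussianReal, charFun_apply, integral_map hm.aemeasurable (by fun_prop)]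
  have h := charFun_gaussianEuclidean hl (s • e)
  rw [charFun_apply] at h
  have hs : ∀ x : EuclideanSpace ℝ (Fin r),
      inner ℝ (inner ℝ e x : ℝ) s = (inner ℝ x (s • e) : ℝ) := by
    intro x
    rw [inner_smul_right, real_inner_comm x e]
    simp
  simp only [hs]
  rw [h]
  congr 1
  have h1 : l ^ 2 * ‖s • e‖ ^ 2 = s ^ 2 := by
    rw [norm_smul, mul_pow, Real.norm_eq_abs, sq_abs]
    calc l ^ 2 * (s ^ 2 * ‖e‖ ^ 2) = s ^ 2 * (l * ‖e‖) ^ 2 := by ring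
      _ = s ^ 2 := by rw [he]; ring
  rw [h1]
  push_cast
  simp

lemma gaussTail_eq (v : ℝ) : gaussTail v = (gaussianReal 0 1 (Set.Ioi v)).toReal := by
  rw [gaussianReal_apply_eq_integral 0 one_ne_zero, ENNReal.toReal_ofReal]
  · refine setIntegral_congr_fun measurableSet_Ioi fun x _ => ?_
    simp [gaussianPDFReal]
    ring
  · exact integral_nonneg fun x => gaussianPDFReal_nonneg _ _ _

lemma gaussTail_antitone : Antitone gaussTail := by
  intro a b hab
  rw [gaussTail_eq, gaussTail_eq]
  exact ENNReal.toReal_mono (measure_ne_top _ _) (measure_mono (Set.Ioi_subset_Ioi hab))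

lemma gaussianEuclidean_halfSpace {r : ℕ} {l : ℝ} (hl : 0 < l) {e : EuclideanSpace ℝ (Fin r)}
    (he : l * ‖e‖ = 1) (s : ℝ) :
    (gaussianEuclidean (0 : EuclideanSpace ℝ (Fin r)) l {x | s < inner ℝ e x}).toReal
      = gaussTail s := by
  rw [gaussTail_eq, ← map_inner_gaussianEuclidean hl he,
    Measure.map_apply (by fun_prop) measurableSet_Ioi]
  rfl

/-! ### Neyman–Pearson for two shifted Gaussians -/

/-- The half-space on which the likelihood ratio of the two shifted Gaussians exceeds `γ`. -/
lemma mul_centeredPdf_lt_iff {r : ℕ} {γ l : ℝ} (hγ : 1 ≤ γ) (hl : 0 < l)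
    {w : EuclideanSpace ℝ (Fin r)} (hw : w ≠ 0) (x : EuclideanSpace ℝ (Fin r)) :
    γ * centeredPdf r l (x + w) < centeredPdf r l x ↔
      Real.log γ * l / ‖w‖ - ‖w‖ / (2 * l) < inner ℝ ((l * ‖w‖)⁻¹ • w) x := by
  have hd : 0 < ‖w‖ := norm_pos_iff.2 hw
  have hγ0 : 0 < γ := by linarith
  have hc : 0 < (2 * Real.pi * l ^ 2).rpow (-(r : ℝ) / 2) := Real.rpow_pos_of_pos (by positivity) _
  have hn : ‖x + w‖ ^ 2 = ‖x‖ ^ 2 + 2 * inner ℝ w x + ‖w‖ ^ 2 := by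
    rw [norm_add_sq_real, real_inner_comm]
  rw [centeredPdf, centeredPdf, mul_left_comm, mul_lt_mul_iff_right₀ hc]
  nth_rewrite 1 [← Real.exp_log hγ0]
  rw [← Real.exp_add, Real.exp_lt_exp, hn, real_inner_smul_left]
  have e1 : (Real.log γ + -(‖x‖ ^ 2 + 2 * inner ℝ w x + ‖w‖ ^ 2) / (2 * l ^ 2)
      < -‖x‖ ^ 2 / (2 * l ^ 2)) ↔ 0 < 2 * inner ℝ w x + ‖w‖ ^ 2 - 2 * l ^ 2 * Real.log γ := by
    have : -‖x‖ ^ 2 / (2 * l ^ 2) - (Real.log γ + -(‖x‖ ^ 2 + 2 * inner ℝ w x + ‖w‖ ^ 2)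
        / (2 * l ^ 2)) = (2 * inner ℝ w x + ‖w‖ ^ 2 - 2 * l ^ 2 * Real.log γ) / (2 * l ^ 2) := by
      field_simp
      ring
    rw [← sub_pos, this, div_pos_iff_of_pos_right (by positivity)]
  have e2 : (Real.log γ * l / ‖w‖ - ‖w‖ / (2 * l) < (l * ‖w‖)⁻¹ * inner ℝ w x)
      ↔ 0 < 2 * inner ℝ w x + ‖w‖ ^ 2 - 2 * l ^ 2 * Real.log γ := by
    have : (l * ‖w‖)⁻¹ * inner ℝ w x - (Real.log γ * l / ‖w‖ - ‖w‖ / (2 * l))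
        = (2 * inner ℝ w x + ‖w‖ ^ 2 - 2 * l ^ 2 * Real.log γ) / (2 * l * ‖w‖) := by
      field_simp
      ring
    rw [← sub_pos, this, div_pos_iff_of_pos_right (by positivity)]
  rw [e1, e2]

/-- Neyman–Pearson: a half-space maximises `S ↦ G(S) - γ G(S + w)`, with value `θ_γ(‖w‖, l)`. -/
lemma gaussian_shift_le_theta {r : ℕ} {γ l : ℝ} (hγ : 1 ≤ γ) (hl : 0 < l)
    {w : EuclideanSpace ℝ (Fin r)} (hw : w ≠ 0)
    {S : Set (EuclideanSpace ℝ (Fin r))} (hS : MeasurableSet S) :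
    (gaussianEuclidean (0 : EuclideanSpace ℝ (Fin r)) l S).toReal
      - γ * (gaussianEuclidean (0 : EuclideanSpace ℝ (Fin r)) l {y | y - w ∈ S}).toReal
      ≤ thetaGamma γ ‖w‖ l := by
  have hd : 0 < ‖w‖ := norm_pos_iff.2 hw
  set e := (l * ‖w‖)⁻¹ • w with he_def
  have he : l * ‖e‖ = 1 := by
    rw [he_def, norm_smul, Real.norm_of_nonneg (by positivity)]
    field_simp
  have hew : inner ℝ e w = ‖w‖ / l := by
    rw [he_def, real_inner_smul_left, real_inner_self_eq_norm_sq]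
    field_simp
  set u := Real.log γ * l / ‖w‖ - ‖w‖ / (2 * l) with hu
  set H : Set (EuclideanSpace ℝ (Fin r)) := {x | u < inner ℝ e x} with hH
  have hHm : MeasurableSet H := measurableSet_lt measurable_const (by fun_prop)
  have hi1 := integrable_centeredPdf (r := r) hl
  have hi2 : Integrable (fun x => γ * centeredPdf r l (x + w)) :=
    (hi1.comp_add_right w).const_mul γ
  have key : ∀ T : Set (EuclideanSpace ℝ (Fin r)), MeasurableSet T →
      (gaussianEuclidean (0 : EuclideanSpace ℝ (Fin r)) l T).toReal
        - γ * (gaussianEuclidean (0 : EuclideanSpace ℝ (Fin r)) l {y | y - w ∈ T}).toReal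
      = ∫ x, T.indicator (fun x => centeredPdf r l x - γ * centeredPdf r l (x + w)) x := by
    intro T hT
    rw [gaussianEuclidean_real_eq hl hT, gaussianEuclidean_real_shift_eq hl hT,
      integral_indicator hT, integral_sub hi1.integrableOn hi2.integrableOn, integral_const_mul]
  have hval : (gaussianEuclidean (0 : EuclideanSpace ℝ (Fin r)) l H).toReal
        - γ * (gaussianEuclidean (0 : EuclideanSpace ℝ (Fin r)) l {y | y - w ∈ H}).toReal
      = thetaGamma γ ‖w‖ l := by
    have hH' : {y | y - w ∈ H} = {y | u + ‖w‖ / l < inner ℝ e y} := by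
      ext y
      simp only [hH, Set.mem_ofPred_eq, inner_sub_right, hew, lt_sub_iff_add_lt]
    rw [hH', gaussianEuclidean_halfSpace hl he, gaussianEuclidean_halfSpace hl he, thetaGamma]
    congr 3
    rw [hu]
    field_simp
    ring
  rw [← hval, key S hS, key H hHm]
  refine integral_mono ((hi1.sub hi2).indicator hS) ((hi1.sub hi2).indicator hHm) fun x => ?_
  have hx := mul_centeredPdf_lt_iff hγ hl hw x
  by_cases hxH : x ∈ H
  · have h1 : γ * centeredPdf r l (x + w) ≤ centeredPdf r l x := (hx.2 hxH).le
    by_cases hxS : x ∈ S <;> simp [hxH, hxS, h1]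
  · have h1 : centeredPdf r l x ≤ γ * centeredPdf r l (x + w) :=
      not_lt.1 fun h => hxH (hx.1 h)
    by_cases hxS : x ∈ S <;> simp [hxH, hxS, h1]

/-! ### Monotonicity of `θ_γ` in the distance -/

lemma thetaGamma_nonneg {γ a l : ℝ} (hγ : 1 ≤ γ) (hl : 0 < l) (ha : 0 < a) :
    0 ≤ thetaGamma γ a l := by
  have hw : ‖EuclideanSpace.single (0 : Fin 1) a‖ = a := by simp [abs_of_pos ha]
  have h := gaussian_shift_le_theta hγ hl (w := EuclideanSpace.single (0 : Fin 1) a)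
    (by rw [← norm_pos_iff, hw]; exact ha) MeasurableSet.empty
  rw [hw] at h
  simpa using h

/-- `θ_γ(a, l)` dominates `Q(s) - γ Q(s + a / l)` for every threshold `s`, by Neyman–Pearson
for half-lines. -/
lemma gaussTail_sub_le_theta {γ a l : ℝ} (hγ : 1 ≤ γ) (hl : 0 < l) (ha : 0 < a) (s : ℝ) :
    gaussTail s - γ * gaussTail (s + a / l) ≤ thetaGamma γ a l := by
  set w := EuclideanSpace.single (0 : Fin 1) a with hw_def
  have hw : ‖w‖ = a := by simp [hw_def, abs_of_pos ha]
  set e := (l * a)⁻¹ • w with he_def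
  have he : l * ‖e‖ = 1 := by
    rw [he_def, norm_smul, Real.norm_of_nonneg (by positivity), hw]
    field_simp
  have hew : inner ℝ e w = a / l := by
    rw [he_def, real_inner_smul_left, real_inner_self_eq_norm_sq, hw]
    field_simp
  have h := gaussian_shift_le_theta hγ hl (w := w) (by rw [← norm_pos_iff, hw]; exact ha)
    (S := {x | s < inner ℝ e x}) (measurableSet_lt measurable_const (by fun_prop))
  have hH' : {y | y - w ∈ {x | s < inner ℝ e x}} = {y | s + a / l < inner ℝ e y} := by
    ext y
    simp only [Set.mem_ofPred_eq, inner_sub_right, hew, lt_sub_iff_add_lt]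
  rwa [hH', gaussianEuclidean_halfSpace hl he, gaussianEuclidean_halfSpace hl he, hw] at h

lemma thetaGamma_mono {γ l a b : ℝ} (hγ : 1 ≤ γ) (hl : 0 < l) (ha : 0 < a) (hab : a ≤ b) :
    thetaGamma γ a l ≤ thetaGamma γ b l := by
  refine le_trans ?_ (gaussTail_sub_le_theta hγ hl (ha.trans_le hab)
    (Real.log γ * l / a - a / (2 * l)))
  have h1 : Real.log γ * l / a + a / (2 * l) = Real.log γ * l / a - a / (2 * l) + a / l := by
    field_simp
    ring
  rw [thetaGamma, h1]
  have h2 : a / l ≤ b / l := by gcongr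
  have h3 := gaussTail_antitone (add_le_add_right h2 (Real.log γ * l / a - a / (2 * l)))
  have h4 := mul_le_mul_of_nonneg_left h3 (by linarith : (0 : ℝ) ≤ γ)
  linarith

/-- The bound for two point masses. -/
lemma gaussian_translates_le {r : ℕ} {γ l K : ℝ} (hγ : 1 ≤ γ) (hl : 0 < l) (hK : 0 < K)
    {a b : EuclideanSpace ℝ (Fin r)} (ha : ‖a‖ ≤ K) (hb : ‖b‖ ≤ K)
    {S : Set (EuclideanSpace ℝ (Fin r))} (hS : MeasurableSet S) :
    (gaussianEuclidean (0 : EuclideanSpace ℝ (Fin r)) l {y | a + y ∈ S}).toReal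
      - γ * (gaussianEuclidean (0 : EuclideanSpace ℝ (Fin r)) l {y | b + y ∈ S}).toReal
      ≤ thetaGamma γ (2 * K) l := by
  rcases eq_or_ne a b with rfl | hab
  · have h0 := thetaGamma_nonneg hγ hl (by linarith : 0 < 2 * K)
    have h1 : 0 ≤ (gaussianEuclidean (0 : EuclideanSpace ℝ (Fin r)) l {y | a + y ∈ S}).toReal :=
      ENNReal.toReal_nonneg
    nlinarith
  · have hw : a - b ≠ 0 := sub_ne_zero.2 hab
    have hle : ‖a - b‖ ≤ 2 * K := (norm_sub_le a b).trans (by linarith)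
    refine le_trans ?_ (thetaGamma_mono hγ hl (norm_pos_iff.2 hw) hle)
    have h := gaussian_shift_le_theta hγ hl hw (S := {y | a + y ∈ S})
      ((measurable_const_add a) hS)
    have hset : {y | y - (a - b) ∈ {y | a + y ∈ S}} = {y | b + y ∈ S} := by
      ext y
      have : a + (y - (a - b)) = b + y := by abel
      simp only [Set.mem_ofPred_eq, this]
    rwa [hset] at h

/-! ### Averaging over the two mixing measures -/

lemma measurable_gaussianEuclidean_translate {r : ℕ} {l : ℝ} (hl : 0 < l)
    {S : Set (EuclideanSpace ℝ (Fin r))} (hS : MeasurableSet S) :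
    Measurable fun a => gaussianEuclidean (0 : EuclideanSpace ℝ (Fin r)) l {y | a + y ∈ S} := by
  have := isProbabilityMeasure_gaussianEuclidean (r := r) hl
  have hadd : MeasurableSet
      {p : EuclideanSpace ℝ (Fin r) × EuclideanSpace ℝ (Fin r) | p.1 + p.2 ∈ S} :=
    (measurable_fst.add measurable_snd) hS
  exact measurable_measure_prodMk_left hadd

lemma integrable_gaussianEuclidean_translate {r : ℕ} {l : ℝ} (hl : 0 < l)
    (P : Measure (EuclideanSpace ℝ (Fin r))) [IsProbabilityMeasure P]
    {S : Set (EuclideanSpace ℝ (Fin r))} (hS : MeasurableSet S) :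
    Integrable (fun a =>
      (gaussianEuclidean (0 : EuclideanSpace ℝ (Fin r)) l {y | a + y ∈ S}).toReal) P := by
  have := isProbabilityMeasure_gaussianEuclidean (r := r) hl
  refine Integrable.of_bound
    (measurable_gaussianEuclidean_translate hl hS).ennreal_toReal.aestronglyMeasurable 1
    (Filter.Eventually.of_forall fun a => ?_)
  rw [Real.norm_of_nonneg ENNReal.toReal_nonneg]
  exact measureReal_le_one

lemma gaussConv_toReal {r : ℕ} {l : ℝ} (hl : 0 < l)
    (P : Measure (EuclideanSpace ℝ (Fin r))) [IsProbabilityMeasure P]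
    {S : Set (EuclideanSpace ℝ (Fin r))} (hS : MeasurableSet S) :
    (gaussConv P l S).toReal
      = ∫ a, (gaussianEuclidean (0 : EuclideanSpace ℝ (Fin r)) l {y | a + y ∈ S}).toReal ∂P := by
  have := isProbabilityMeasure_gaussianEuclidean (r := r) hl
  have hadd : Measurable
      fun p : EuclideanSpace ℝ (Fin r) × EuclideanSpace ℝ (Fin r) => p.1 + p.2 :=
    measurable_fst.add measurable_snd
  rw [integral_toReal (measurable_gaussianEuclidean_translate hl hS).aemeasurable
    (Filter.Eventually.of_forall fun a => measure_lt_top _ _), gaussConv,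
    Measure.map_apply hadd hS, Measure.prod_apply (hadd hS)]
  rfl

/-- Gaussian mechanism convexity bound: if `P` and `Q` are supported on a compact set `C`
of radius `K`, then `E_γ(P * N(0,λ²I) ‖ Q * N(0,λ²I)) ≤ θ_γ(2K, λ)`. -/
theorem egamma_gaussConv_le {r : ℕ} (γ : ℝ) (hγ : 1 ≤ γ) (l : ℝ) (hl : 0 < l)
    (C : Set (EuclideanSpace ℝ (Fin r))) (hC : IsCompact C)
    (K : ℝ) (hK : 0 < K) (hCK : ∀ w ∈ C, ‖w‖ ≤ K)
    (P Q : Measure (EuclideanSpace ℝ (Fin r)))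
    [IsProbabilityMeasure P] [IsProbabilityMeasure Q]
    (hP : P C = 1) (hQ : Q C = 1) :
    Egamma γ (gaussConv P l) (gaussConv Q l) ≤ thetaGamma γ (2 * K) l := by
  have hPC : ∀ᵐ a ∂P, a ∈ C := (mem_ae_iff_prob_eq_one hC.measurableSet).2 hP
  have hQC : ∀ᵐ b ∂Q, b ∈ C := (mem_ae_iff_prob_eq_one hC.measurableSet).2 hQ
  have : Nonempty {E : Set (EuclideanSpace ℝ (Fin r)) // MeasurableSet E} := ⟨⟨∅, .empty⟩⟩
  refine ciSup_le fun ⟨S, hS⟩ => ?_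
  simp only
  rw [gaussConv_toReal hl P hS, gaussConv_toReal hl Q hS]
  set f : EuclideanSpace ℝ (Fin r) → ℝ := fun a =>
    (gaussianEuclidean (0 : EuclideanSpace ℝ (Fin r)) l {y | a + y ∈ S}).toReal
  have hfP : Integrable f P := integrable_gaussianEuclidean_translate hl P hS
  have hfQ : Integrable f Q := integrable_gaussianEuclidean_translate hl Q hS
  have hpt : ∀ a ∈ C, ∀ b ∈ C, f a - γ * f b ≤ thetaGamma γ (2 * K) l := fun a ha b hb =>
    gaussian_translates_le hγ hl hK (hCK a ha) (hCK b hb) hS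
  have h1 : ∀ b ∈ C, ∫ a, f a ∂P ≤ thetaGamma γ (2 * K) l + γ * f b := by
    intro b hb
    have h := integral_mono_ae hfP (integrable_const (thetaGamma γ (2 * K) l + γ * f b))
      (hPC.mono fun a ha => by linarith [hpt a ha b hb])
    simpa using h
  have h2 := integral_mono_ae (μ := Q)
    (integrable_const ((∫ a, f a ∂P) - thetaGamma γ (2 * K) l)) (hfQ.const_mul γ)
    (hQC.mono fun b hb => by linarith [h1 b hb])
  rw [integral_const_mul] at h2
  simp only [integral_const, probReal_univ, smul_eq_mul, one_mul] at h2
  linarith
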